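/- arXiv:2304.06432 — 2 statements merged into one kernel-verified Lean document; each statement's English description precedes it below -/
import Mathlib

section
/- Let α be a Lyndon word of length at least 2 with standard factorization st(α) = (α_L, α_R), and let ζ be a Lyndon word with α ≺ ζ. Then the concatenation αζ is a Lyndon word, and the standard factorization of αζ equals (α, ζ) if and only if ζ ⪯ α_R. -/
/-- A nonempty word over a linearly ordered alphabet is a Lyndon word if it is
strictly lexicographically smaller than every nontrivial rotation of itself
(vacuously true for single letters). -/
def IsLyndon {X : Type*} [LinearOrder X] (w : List X) : Prop :=
  w ≠ [] ∧ ∀ u v : List X, u ≠ [] → v ≠ [] → w = u ++ v → List.Lex (· < ·) w (v ++ u)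

/-!
A word is Lyndon exactly when it is the least of its nonempty suffixes. Hence the least nonempty
suffix of any word is Lyndon, and the right factor of a standard factorization `(l, r)` is the least
nonempty proper suffix of `l ++ r`. If `ζ ≤ r` and `α = l ++ r`, a Lyndon proper suffix of `α ++ ζ`
longer than `ζ` would be `d ++ ζ` with `d` a nonempty proper suffix of `α`, and then
`r ≤ d < d ++ ζ ≤ ζ ≤ r`. If instead `r < ζ`, then `r ++ ζ` is itself such a suffix.
-/

section Lex

variable {X : Type*} [LinearOrder X] {u v : List X}

theorem append_lt_append_left_iff (w : List X) : w ++ u < w ++ v ↔ u < v :=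
  StrictMono.lt_iff_lt (f := (w ++ ·)) fun _ _ => List.append_left_lt

theorem le_append_self_left (u v : List X) : u ≤ u ++ v :=
  not_lt.1 (List.le_append_left (l₁ := u) (l₂ := v))

theorem lt_append_self_left (u : List X) (hv : v ≠ []) : u < u ++ v :=
  (le_append_self_left u v).lt_of_ne (by simpa using hv)

theorem append_lt_append_of_lt_of_not_isPrefix (h : u < v) (hpre : ¬ u <+: v) (a b : List X) :
    u ++ a < v ++ b := by
  induction h with
  | nil => exact absurd ⟨_, List.nil_append _⟩ hpre
  | cons _ ih => exact List.Lex.cons (ih fun huv => hpre ((List.prefix_cons_inj _).2 huv))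
  | rel hxy => exact List.Lex.rel hxy

end Lex

namespace IsLyndon

variable {X : Type*} [LinearOrder X] {u v w : List X}

theorem le_of_suffix (hw : IsLyndon w) (hv : v ≠ []) (hvw : v <:+ w) : w ≤ v := by
  obtain ⟨u, rfl⟩ := hvw
  by_contra! hlt
  have hu : u ≠ [] := by
    rintro rfl
    exact lt_irrefl v hlt
  have hrot : u ++ v < v ++ u := hw.2 u v hu hv rfl
  by_cases hpre : v <+: u ++ v
  · -- Writing `u ++ v = v ++ t`, the rotations to `v ++ u` and to `t ++ v` contradict each other.
    obtain ⟨t, ht⟩ := hpre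
    have hlen : t.length = u.length := by
      have := congrArg List.length ht
      simp only [List.length_append] at this
      omega
    have ht0 : t ≠ [] := List.ne_nil_of_length_pos (hlen ▸ List.length_pos_of_ne_nil hu)
    have htu : t < u := (append_lt_append_left_iff v).1 (ht ▸ hrot)
    have hrot' : u ++ v < t ++ v := hw.2 v t hv ht0 ht.symm
    have hnot : ¬ t <+: u := fun h => htu.ne (h.eq_of_length hlen)
    exact hrot'.asymm (append_lt_append_of_lt_of_not_isPrefix htu hnot v v)
  · have := append_lt_append_of_lt_of_not_isPrefix hlt hpre u []
    exact hrot.asymm (by simpa only [List.append_nil] using this)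

theorem of_forall_suffix_le (hw : w ≠ []) (h : ∀ v, v ≠ [] → v <:+ w → w ≤ v) : IsLyndon w := by
  refine ⟨hw, ?_⟩
  rintro u v hu hv rfl
  have hlt : u ++ v < v := (h v hv (List.suffix_append u v)).lt_of_ne (by simpa using hu)
  exact hlt.trans_le (le_append_self_left v u)

theorem exists_suffix_le (hw : w ≠ []) : ∃ v, v <:+ w ∧ IsLyndon v ∧ v ≤ w := by
  let s : Finset (List X) := w.tails.toFinset.filter (· ≠ [])
  have mem_s (v : List X) : v ∈ s ↔ v <:+ w ∧ v ≠ [] := by simp [s]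
  have hws : w ∈ s := (mem_s w).2 ⟨List.suffix_rfl, hw⟩
  obtain ⟨v, hvs, hmin⟩ := s.exists_min_image id ⟨w, hws⟩
  obtain ⟨hvw, hv⟩ := (mem_s v).1 hvs
  refine ⟨v, hvw, of_forall_suffix_le hv fun t ht htv => ?_, hmin w hws⟩
  exact hmin t ((mem_s t).2 ⟨htv.trans hvw, ht⟩)

theorem append_lt_right (hu : u ≠ []) (hv : IsLyndon v) (huv : u < v) : u ++ v < v := by
  by_cases hpre : u <+: v
  · obtain ⟨t, rfl⟩ := hpre
    have ht : t ≠ [] := by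
      rintro rfl
      simp at huv
    have hle : u ++ t ≤ t := hv.le_of_suffix ht (List.suffix_append u t)
    exact (append_lt_append_left_iff u).2 (hle.lt_of_ne (by simpa using hu))
  · simpa only [List.append_nil] using append_lt_append_of_lt_of_not_isPrefix huv hpre v []

theorem append (hu : IsLyndon u) (hv : IsLyndon v) (huv : u < v) : IsLyndon (u ++ v) := by
  refine of_forall_suffix_le (List.append_ne_nil_of_left_ne_nil hu.1 v) fun s hs hsuf => ?_
  rcases List.suffix_or_suffix_of_suffix hsuf (List.suffix_append u v) with hsv | ⟨c, rfl⟩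
  · exact (append_lt_right hu.1 hv huv).le.trans (hv.le_of_suffix hs hsv)
  · have hcu : c <:+ u := List.suffix_append_self_iff.1 hsuf
    rcases eq_or_ne c [] with rfl | hc
    · exact (append_lt_right hu.1 hv huv).le
    rcases (hu.le_of_suffix hc hcu).eq_or_lt with rfl | hlt
    · exact le_rfl
    · have hnot : ¬ u <+: c := fun h => hlt.ne (h.eq_of_length_le hcu.length_le)
      exact (append_lt_append_of_lt_of_not_isPrefix hlt hnot v v).le

end IsLyndon

/-- `(l, r)` is the standard factorization of the word `l ++ r`: the right factor `r` is its longest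
proper suffix that is a Lyndon word. The word `l ++ r` itself need not be Lyndon. -/
structure IsStandardFactorization {X : Type*} [LinearOrder X] (l r : List X) : Prop where
  left_ne_nil : l ≠ []
  isLyndon_right : IsLyndon r
  length_le : ∀ s p : List X, l ++ r = p ++ s → p ≠ [] → IsLyndon s → s.length ≤ r.length

namespace IsStandardFactorization

variable {X : Type*} [LinearOrder X] {l r p s z : List X}

theorem right_le (h : IsStandardFactorization l r) (hps : l ++ r = p ++ s) (hp : p ≠ [])
    (hs : s ≠ []) : r ≤ s := by
  obtain ⟨v, ⟨q, rfl⟩, hv, hvs⟩ := IsLyndon.exists_suffix_le hs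
  have hpv : l ++ r = (p ++ q) ++ v := by rw [hps, List.append_assoc]
  have hlen : v.length ≤ r.length :=
    h.length_le v (p ++ q) hpv (List.append_ne_nil_of_left_ne_nil hp q) hv
  have hvr : v <:+ r :=
    List.suffix_of_suffix_length_le ⟨p ++ q, hpv.symm⟩ (List.suffix_append l r) hlen
  exact (h.isLyndon_right.le_of_suffix hv.1 hvr).trans hvs

theorem append_iff (h : IsStandardFactorization l r) (hz : IsLyndon z) :
    IsStandardFactorization (l ++ r) z ↔ z ≤ r := by
  constructor
  · intro hlr
    by_contra! hrz
    have hlen : (r ++ z).length ≤ z.length :=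
      hlr.length_le (r ++ z) l (List.append_assoc l r z) h.left_ne_nil
        (h.isLyndon_right.append hz hrz)
    have hr : 0 < r.length := List.length_pos_of_ne_nil h.isLyndon_right.1
    rw [List.length_append] at hlen
    omega
  · intro hzr
    refine ⟨List.append_ne_nil_of_left_ne_nil h.left_ne_nil r, hz, fun s p hps hp hs => ?_⟩
    by_contra! hlen
    obtain ⟨d, rfl⟩ : z <:+ s :=
      List.suffix_of_suffix_length_le (List.suffix_append (l ++ r) z) ⟨p, hps.symm⟩ hlen.le
    have hd : d ≠ [] := by
      rintro rfl
      exact lt_irrefl _ hlen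
    have hpd : l ++ r = p ++ d :=
      List.append_cancel_right (hps.trans (List.append_assoc p d z).symm)
    have : r < r := calc
      r ≤ d := h.right_le hpd hp hd
      _ < d ++ z := lt_append_self_left d hz.1
      _ ≤ z := hs.le_of_suffix hz.1 (List.suffix_append d z)
      _ ≤ r := hzr
    exact lt_irrefl r this

end IsStandardFactorization

/-- If `α` is a Lyndon word of length `≥ 2` with standard factorization `(αL, αR)`
(`αR` being the longest proper Lyndon suffix), and `ζ` is a Lyndon word with `α ≺ ζ`,
then `αζ` is Lyndon, and its standard factorization is `(α, ζ)` iff `ζ ⪯ αR`. -/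
theorem stmt_2 {X : Type*} [LinearOrder X] (α αL αR ζ : List X)
    (hα : IsLyndon α) (hlen : 2 ≤ α.length)
    (hfact : α = αL ++ αR) (hαL : αL ≠ []) (hαR : IsLyndon αR)
    (hmax : ∀ δ β' : List X, α = β' ++ δ → β' ≠ [] → IsLyndon δ → δ.length ≤ αR.length)
    (hζ : IsLyndon ζ) (hαζ : List.Lex (· < ·) α ζ) :
    IsLyndon (α ++ ζ) ∧
      ((∀ δ β' : List X, α ++ ζ = β' ++ δ → β' ≠ [] → IsLyndon δ → δ.length ≤ ζ.length) ↔
        ¬ List.Lex (· < ·) αR ζ) := by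
  subst hfact
  have hstd : IsStandardFactorization αL αR := ⟨hαL, hαR, hmax⟩
  refine ⟨hα.append hζ hαζ, ?_⟩
  calc
    _ ↔ IsStandardFactorization (αL ++ αR) ζ :=
      ⟨fun hmaxζ => ⟨hα.1, hζ, hmaxζ⟩, fun hstdζ => hstdζ.length_le⟩
    _ ↔ ζ ≤ αR := hstd.append_iff hζ
    _ ↔ ¬ List.Lex (· < ·) αR ζ := not_lt.symm
end

section
/- Let k be a commutative ring, X a linearly ordered alphabet, x ∈ X a letter and β a Lyndon word with x ≺ β (comparing the one-letter word x with β). Then for every c ≥ 1 the word xβ^c (x followed by c copies of β) is a Lyndon word, and for every b ≥ 0 the identity E(x)·E(β)^b = Σ_{c=0}^{b} binom(b,c)·E(β)^{b−c}·E(xβ^c) holds in the free algebra k⟨X⟩, where E(xβ^0) := E(x). -/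
/-!
If `α ≺ β` are Lyndon words, then `αβ` is a Lyndon word with `αβ ≺ β`, so every `αβ^c` is Lyndon.
If moreover `β` is lexicographically at most every nonempty proper suffix of `α`, as is vacuously
true for a letter `α`, then a proper suffix `sβ` of `αβ` with `s` nonempty satisfies `β ≼ s ≺ sβ`
and so is not Lyndon. Hence `st(αβ) = (α, β)`, and `αβ` inherits the condition from `α`. It
follows that `E(αβ^(c+1)) = [E(αβ^c), E(β)]`, and the identity is the binomial theorem for right
multiplication by `E(β)`, written as the sum of left multiplication by `E(β)` and `a ↦ [a, E(β)]`,
two operators that commute.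
-/

theorem append_lt_append_of_not_isPrefix {X : Type*} [LT X] {a b : List X} (hab : a < b)
    (hpre : ¬ a <+: b) (u v : List X) : a ++ u < b ++ v := by
  induction hab with
  | nil => exact absurd List.nil_prefix hpre
  | cons _ ih => exact List.Lex.cons (ih fun h => hpre (List.cons_prefix_cons.2 ⟨rfl, h⟩))
  | rel h => exact List.Lex.rel h

section Words

variable {X : Type*} [LinearOrder X] {α β : List X}

theorem self_le_append (a b : List X) : a ≤ a ++ b :=
  not_lt.1 List.le_append_left

theorem lt_append_of_ne_nil (a : List X) {b : List X} (hb : b ≠ []) : a < a ++ b :=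
  (self_le_append a b).lt_of_ne (by simpa using hb)

/-- The word `b` is lexicographically at most every nonempty proper suffix of the word `w`. -/
def LeProperSuffixes (b w : List X) : Prop :=
  ∀ u v : List X, u ≠ [] → v ≠ [] → w = u ++ v → b ≤ v

/-- The pair `(α, β)` is the standard factorization of the word `αβ`: the suffix `β` is the longest
proper suffix of `αβ` that is a Lyndon word. -/
def IsStandardFactorization_s3 (α β : List X) : Prop :=
  α ≠ [] ∧ IsLyndon β ∧
    ∀ δ γ : List X, α ++ β = γ ++ δ → γ ≠ [] → IsLyndon δ → δ.length ≤ β.length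

theorem leProperSuffixes_singleton (b : List X) (x : X) : LeProperSuffixes b [x] := by
  intro u v hu hv h
  rcases List.singleton_eq_append_iff.1 h with ⟨rfl, -⟩ | ⟨-, rfl⟩
  · exact absurd rfl hu
  · exact absurd rfl hv

namespace IsLyndon

theorem not_isPrefix_of_eq_append {w u v : List X} (hw : IsLyndon w) (hu : u ≠ []) (hv : v ≠ [])
    (h : w = u ++ v) : ¬ v <+: w := by
  rintro ⟨t, ht⟩
  have hlen : t.length = u.length := by
    have h_total := congrArg List.length (ht.trans h)
    simp only [List.length_append] at h_total
    omega
  have ht_ne : t ≠ [] := List.ne_nil_of_length_pos (hlen ▸ List.length_pos_iff.2 hu)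
  have htu : t < u := by
    have h_rot : v ++ t < v ++ u := ht ▸ hw.2 u v hu hv h
    refine lt_of_not_ge fun hut => ?_
    rcases hut.lt_or_eq with hut | rfl
    · exact lt_asymm h_rot (List.append_left_lt hut)
    · exact lt_irrefl _ h_rot
  have ht_pre : ¬ t <+: u := fun h => htu.ne (h.eq_of_length hlen)
  have h_lt : t ++ v < w := h ▸ append_lt_append_of_not_isPrefix htu ht_pre v v
  exact lt_asymm h_lt (hw.2 v t hv ht_ne ht.symm)

theorem leProperSuffixes {w : List X} (hw : IsLyndon w) : LeProperSuffixes w w := by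
  intro u v hu hv h
  by_contra! hvw
  have h_rot : v ++ u < w := by
    simpa only [List.append_nil] using
      append_lt_append_of_not_isPrefix hvw (hw.not_isPrefix_of_eq_append hu hv h) u []
  exact lt_asymm h_rot (hw.2 u v hu hv h)

end IsLyndon

theorem isLyndon_iff_leProperSuffixes {w : List X} :
    IsLyndon w ↔ w ≠ [] ∧ LeProperSuffixes w w := by
  refine ⟨fun hw => ⟨hw.1, hw.leProperSuffixes⟩, fun ⟨hne, hw⟩ => ⟨hne, ?_⟩⟩
  intro u v hu hv h
  exact (hw u v hu hv h).trans_lt (lt_append_of_ne_nil v hu)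

theorem isLyndon_singleton (x : X) : IsLyndon [x] :=
  isLyndon_iff_leProperSuffixes.2 ⟨List.cons_ne_nil x [], leProperSuffixes_singleton [x] x⟩

namespace IsLyndon

theorem le_of_eq_append {w u v : List X} (hw : IsLyndon w) (hv : v ≠ []) (h : w = u ++ v) :
    w ≤ v := by
  rcases eq_or_ne u [] with rfl | hu
  · exact h.le
  · exact hw.leProperSuffixes u v hu hv h

theorem append_lt_right_s3 (hα : α ≠ []) (hβ : IsLyndon β) (hαβ : α < β) : α ++ β < β := by
  by_cases hpre : α <+: β
  · obtain ⟨γ, rfl⟩ := hpre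
    have hγ : γ ≠ [] := by rintro rfl; simp at hαβ
    have hlt : α ++ γ < γ := (hβ.leProperSuffixes α γ hα hγ rfl).lt_of_ne (by simpa using hα)
    exact List.append_left_lt hlt
  · simpa only [List.append_nil] using append_lt_append_of_not_isPrefix hαβ hpre β []

theorem append_s3 (hα : IsLyndon α) (hβ : IsLyndon β) (hαβ : α < β) : IsLyndon (α ++ β) := by
  refine isLyndon_iff_leProperSuffixes.2 ⟨by simp [hα.1], fun u v hu hv h => ?_⟩
  rcases List.append_eq_append_iff.1 h with ⟨_, -, hβ_eq⟩ | ⟨s, hα_eq, rfl⟩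
  · exact (hβ.append_lt_right_s3 hα.1 hαβ).le.trans (hβ.le_of_eq_append hv hβ_eq)
  · rcases eq_or_ne s [] with rfl | hs
    · exact (hβ.append_lt_right_s3 hα.1 hαβ).le
    · have hne : α ≠ s := by simpa [hα_eq] using hu
      have hlt : α < s := (hα.leProperSuffixes u s hu hs hα_eq).lt_of_ne hne
      have hpre : ¬ α <+: s := fun hαs => hne (hαs.eq_of_length_le (by simp [hα_eq]))
      exact (append_lt_append_of_not_isPrefix hlt hpre β β).le

theorem append_flatten_replicate (hα : IsLyndon α) (hβ : IsLyndon β) (hαβ : α < β) (c : ℕ) :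
    IsLyndon (α ++ (List.replicate c β).flatten) := by
  induction c generalizing α with
  | zero => simpa
  | succ c ih =>
    rw [List.replicate_succ, List.flatten_cons, ← List.append_assoc]
    exact ih (hα.append_s3 hβ hαβ) (hβ.append_lt_right_s3 hα.1 hαβ)

end IsLyndon

namespace LeProperSuffixes

theorem append_s3 (h : LeProperSuffixes β α) (hβ : IsLyndon β) : LeProperSuffixes β (α ++ β) := by
  intro u v hu hv huv
  rcases List.append_eq_append_iff.1 huv with ⟨_, -, hβ_eq⟩ | ⟨s, hα_eq, rfl⟩
  · exact hβ.le_of_eq_append hv hβ_eq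
  · rcases eq_or_ne s [] with rfl | hs
    · exact le_rfl
    · exact (h u s hu hs hα_eq).trans (self_le_append s β)

theorem append_flatten_replicate (h : LeProperSuffixes β α) (hβ : IsLyndon β) (c : ℕ) :
    LeProperSuffixes β (α ++ (List.replicate c β).flatten) := by
  induction c generalizing α with
  | zero => simpa
  | succ c ih =>
    rw [List.replicate_succ, List.flatten_cons, ← List.append_assoc]
    exact ih (h.append_s3 hβ)

theorem isStandardFactorization (h : LeProperSuffixes β α) (hα : α ≠ []) (hβ : IsLyndon β) :
    IsStandardFactorization_s3 α β := by
  refine ⟨hα, hβ, fun δ γ hγδ hγ hδ => ?_⟩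
  rcases List.append_eq_append_iff.1 hγδ with ⟨_, -, rfl⟩ | ⟨s, hα_eq, rfl⟩
  · simp
  · rcases eq_or_ne s [] with rfl | hs
    · simp
    · have h_lt : β < s ++ β := (h γ s hγ hs hα_eq).trans_lt (lt_append_of_ne_nil s hβ.1)
      exact absurd (hδ.leProperSuffixes s β hs hβ.1 rfl) h_lt.not_ge

end LeProperSuffixes

end Words

theorem mul_pow_eq_sum_choose_of_lie {A : Type*} [Ring A] (e : A) (y : ℕ → A)
    (hy : ∀ c, y (c + 1) = ⁅y c, e⁆) (b : ℕ) :
    y 0 * e ^ b = ∑ c ∈ Finset.range (b + 1), b.choose c • (e ^ (b - c) * y c) := by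
  let L : Module.End ℤ A := LinearMap.mulLeft ℤ e
  let R : Module.End ℤ A := LinearMap.mulRight ℤ e
  have h_comm : Commute L (R - L) :=
    (LinearMap.commute_mulLeft_right e e).sub_right (Commute.refl L)
  have h_iterate (c : ℕ) : ((R - L) ^ c) (y 0) = y c := by
    induction c with
    | zero => rfl
    | succ c ih =>
      rw [pow_succ', Module.End.mul_apply, ih, hy, Ring.lie_def]
      rfl
  calc
    y 0 * e ^ b = ((R - L + L) ^ b) (y 0) := by simp [R]
    _ = ∑ c ∈ Finset.range (b + 1), b.choose c • (L ^ (b - c)) (((R - L) ^ c) (y 0)) := by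
      simp only [h_comm.symm.add_pow, (h_comm.symm.pow_pow _ _).eq, ← nsmul_eq_mul',
        LinearMap.sum_apply, LinearMap.smul_apply, Module.End.mul_apply]
    _ = ∑ c ∈ Finset.range (b + 1), b.choose c • (e ^ (b - c) * y c) := by
      simp only [h_iterate, L, LinearMap.pow_mulLeft, LinearMap.mulLeft_apply]

theorem stmt_3_general {X : Type*} [LinearOrder X] {A : Type*} [Ring A] {E : List X → A}
    (hE : ∀ γ δ : List X, IsLyndon (γ ++ δ) → IsStandardFactorization_s3 γ δ →
      E (γ ++ δ) = ⁅E γ, E δ⁆)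
    {α β : List X} (hα : IsLyndon α) (hβ : IsLyndon β) (hαβ : α < β)
    (hsuff : LeProperSuffixes β α) :
    (∀ c : ℕ, IsLyndon (α ++ (List.replicate c β).flatten)) ∧
    ∀ b : ℕ, E α * E β ^ b =
      ∑ c ∈ Finset.range (b + 1),
        b.choose c • (E β ^ (b - c) * E (α ++ (List.replicate c β).flatten)) := by
  have h_lyndon (c : ℕ) := hα.append_flatten_replicate hβ hαβ c
  refine ⟨h_lyndon, fun b => ?_⟩
  have h_step (c : ℕ) : E (α ++ (List.replicate (c + 1) β).flatten) =
      ⁅E (α ++ (List.replicate c β).flatten), E β⁆ := by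
    have h_split : α ++ (List.replicate (c + 1) β).flatten =
        (α ++ (List.replicate c β).flatten) ++ β := by
      simp [List.replicate_succ']
    rw [h_split]
    exact hE _ _ (h_split ▸ h_lyndon (c + 1))
      ((hsuff.append_flatten_replicate hβ c).isStandardFactorization (h_lyndon c).1 hβ)
  simpa using mul_pow_eq_sum_choose_of_lie (E β)
    (fun c => E (α ++ (List.replicate c β).flatten)) h_step b

/-- For a letter `x` and a Lyndon word `β` with `x ≺ β`, the word `xβ^c` is Lyndon
for `c ≥ 1`, and `E(x)·E(β)^b = Σ_{c=0}^{b} C(b,c)·E(β)^{b−c}·E(xβ^c)` holds in the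
free algebra, where `E` is the Lyndon–Shirshov basis (characterized by the two
hypotheses `hE1`, `hE2`). -/
theorem stmt_3 {X : Type*} [LinearOrder X] (k : Type*) [CommRing k]
    (E : List X → FreeAlgebra k X)
    (hE1 : ∀ x : X, E [x] = FreeAlgebra.ι k x)
    (hE2 : ∀ αL αR : List X, IsLyndon (αL ++ αR) → αL ≠ [] → IsLyndon αR →
      (∀ δ β' : List X, αL ++ αR = β' ++ δ → β' ≠ [] → IsLyndon δ →
        δ.length ≤ αR.length) →
      E (αL ++ αR) = E αL * E αR - E αR * E αL)
    (x : X) (β : List X) (hβ : IsLyndon β) (hxβ : List.Lex (· < ·) [x] β) :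
    (∀ c : ℕ, 1 ≤ c → IsLyndon (x :: (List.replicate c β).flatten)) ∧
    ∀ b : ℕ, E [x] * E β ^ b =
      ∑ c ∈ Finset.range (b + 1),
        b.choose c • (E β ^ (b - c) * E (x :: (List.replicate c β).flatten)) := by
  have h := stmt_3_general (fun γ δ hγδ ⟨hγ, hδ, hmax⟩ => hE2 γ δ hγδ hγ hδ hmax)
    (isLyndon_singleton x) hβ hxβ (leProperSuffixes_singleton β x)
  exact ⟨fun c _ => h.1 c, h.2⟩
end
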